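/- Every square matrix A of any size s ≥ 1 over a field F admits an LEU-decomposition (with I = J = 𝟙): there exist an invertible lower triangular matrix L, a matrix E ∈ P_s, and an upper triangular matrix U with unit diagonal such that A = L⁻¹ E U⁻¹, L − (𝟙 − I_E) ∈ F_{𝟙, I_E}, and U − (𝟙 − J_E) ∈ F_{J_E, 𝟙}. -/

import Mathlib

open Matrix

/-- `P_n`: matrices all of whose entries lie in `{0,1}`, with at most one nonzero
entry in each row and at most one nonzero entry in each column. -/
def InP {F : Type*} [Field F] {m : Type*} (E : Matrix m m F) : Prop :=
  (∀ i j, E i j = 0 ∨ E i j = 1) ∧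
  (∀ i j k, E i j ≠ 0 → E i k ≠ 0 → j = k) ∧
  (∀ i j k, E i j ≠ 0 → E k j ≠ 0 → i = k)

/-- `D_n`: diagonal matrices with diagonal entries in `{0,1}`. -/
def InD {F : Type*} [Field F] {m : Type*} (M : Matrix m m F) : Prop :=
  M.IsDiag ∧ ∀ i, M i i = 0 ∨ M i i = 1

/-- `F_{I,J}`: the set of matrices `B` with `I * B * J = B`. -/
def InFIJ {F : Type*} [Field F] {n : ℕ} (I J B : Matrix (Fin n) (Fin n) F) : Prop :=
  I * B * J = B

/-- `(L, E, U)` is an LEU-decomposition of `A ∈ F_{I,J}`: `A = L⁻¹ * E * U⁻¹`,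
`E ∈ P_n`, `L` is an invertible lower triangular matrix, `U` is an upper
triangular matrix with unit diagonal, `L - (𝟙 - I_E) ∈ F_{I, I_E}` and
`U - (𝟙 - J_E) ∈ F_{J_E, J}`, where `I_E = E * Eᵀ` and `J_E = Eᵀ * E`. -/
def IsLEU {F : Type*} [Field F] {n : ℕ}
    (I J A L E U : Matrix (Fin n) (Fin n) F) : Prop :=
  A = L⁻¹ * E * U⁻¹ ∧ InP E ∧ IsUnit L ∧
  (∀ i j : Fin n, i < j → L i j = 0) ∧
  (∀ i j : Fin n, j < i → U i j = 0) ∧ (∀ i, U i i = 1) ∧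
  InFIJ I (E * Eᵀ) (L - (1 - E * Eᵀ)) ∧
  InFIJ (Eᵀ * E) J (U - (1 - Eᵀ * E))

/-!
Gaussian elimination with a pivot `p, j` chosen so that `p` is the first unreduced row and `j` its
leading column only ever multiplies by a lower triangular matrix on the left and by an upper
unitriangular matrix on the right, and it does not disturb the rows that are already reduced.
Repeating it yields `A = M E V` with `E ∈ P_s`. Since `E J_E = E`, the rows of `V` outside the
support of `J_E` can be replaced by rows of the identity without changing `E V`; the inverse `U` of
the new matrix satisfies `(𝟙 - J_E) U = 𝟙 - J_E`, which is the condition on `U`. Transposing, the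
same construction applied to `Mᵀ` gives `L`.
-/

section Triangular

variable {m R : Type*}

theorem mul_apply_self_of_blockTriangular {α : Type*} [Fintype m] [NonUnitalNonAssocSemiring R]
    [LinearOrder α] {b : m → α} (hb : Function.Injective b) {M N : Matrix m m R}
    (hM : M.BlockTriangular b) (hN : N.BlockTriangular b) (i : m) :
    (M * N) i i = M i i * N i i := by
  rw [mul_apply]
  refine Fintype.sum_eq_single i fun k hk => ?_
  rcases lt_or_gt_of_ne (hb.ne hk) with hlt | hgt
  · rw [hM hlt, zero_mul]
  · rw [hN hgt, mul_zero]

/-- Upper triangular matrices with unit diagonal. -/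
def IsUpperUnitriangular [LT m] [Zero R] [One R] (V : Matrix m m R) : Prop :=
  V.IsUpperTriangular ∧ ∀ i, V i i = 1

variable [LinearOrder m]

theorem IsUpperUnitriangular.one [Zero R] [One R] : IsUpperUnitriangular (1 : Matrix m m R) :=
  ⟨blockTriangular_one, one_apply_eq⟩

variable [Fintype m]

theorem IsUpperUnitriangular.mul [NonAssocSemiring R] {V W : Matrix m m R}
    (hV : IsUpperUnitriangular V) (hW : IsUpperUnitriangular W) : IsUpperUnitriangular (V * W) :=
  ⟨hV.1.mul hW.1, fun i => by
    rw [mul_apply_self_of_blockTriangular Function.injective_id hV.1 hW.1, hV.2, hW.2, one_mul]⟩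

variable [CommRing R]

theorem isUnit_iff_of_isUpperTriangular {M : Matrix m m R} (hM : M.IsUpperTriangular) :
    IsUnit M ↔ ∀ i, IsUnit (M i i) := by
  rw [isUnit_iff_isUnit_det, det_of_isUpperTriangular hM, IsUnit.prod_univ_iff]

theorem isUpperTriangular_inv {M : Matrix m m R} (hM : M.IsUpperTriangular) (hu : IsUnit M) :
    M⁻¹.IsUpperTriangular := by
  have := hu.invertible
  exact blockTriangular_inv_of_blockTriangular hM

theorem IsUpperUnitriangular.isUnit {V : Matrix m m R} (hV : IsUpperUnitriangular V) : IsUnit V :=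
  (isUnit_iff_of_isUpperTriangular hV.1).mpr fun i => hV.2 i ▸ isUnit_one

theorem IsUpperUnitriangular.inv {V : Matrix m m R} (hV : IsUpperUnitriangular V) :
    IsUpperUnitriangular V⁻¹ := by
  have hinv := isUpperTriangular_inv hV.1 hV.isUnit
  refine ⟨hinv, fun i => ?_⟩
  calc V⁻¹ i i = V i i * V⁻¹ i i := by rw [hV.2, one_mul]
    _ = (V * V⁻¹) i i := (mul_apply_self_of_blockTriangular Function.injective_id hV.1 hinv i).symm
    _ = 1 := by rw [mul_nonsing_inv V ((isUnit_iff_isUnit_det V).mp hV.isUnit), one_apply_eq]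

end Triangular

section UpdateOne

variable {m n R : Type*}

theorem updateCol_one_mul_of_row_eq_zero [Fintype m] [DecidableEq m] [NonAssocSemiring R] {p : m}
    {C : Matrix m n R} (hC : C.row p = 0) (x : m → R) :
    (1 : Matrix m m R).updateCol p x * C = C := by
  refine Eq.trans ?_ (Matrix.one_mul C)
  ext i c
  simp only [mul_apply]
  refine Finset.sum_congr rfl fun r _ => ?_
  rcases eq_or_ne r p with rfl | hr
  · rw [show C r c = 0 from congrFun hC c, mul_zero, mul_zero]
  · rw [updateCol_ne hr]

theorem mul_updateRow_one_of_col_eq_zero [Fintype n] [DecidableEq n] [NonAssocSemiring R] {j : n}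
    {C : Matrix m n R} (hC : C.col j = 0) (y : n → R) :
    C * (1 : Matrix n n R).updateRow j y = C := by
  refine Eq.trans ?_ (Matrix.mul_one C)
  ext i c
  simp only [mul_apply]
  refine Finset.sum_congr rfl fun r _ => ?_
  rcases eq_or_ne r j with rfl | hr
  · rw [show C i r = 0 from congrFun hC i, zero_mul, zero_mul]
  · rw [updateRow_ne hr]

variable [LinearOrder m]

theorem isLowerTriangular_updateCol_one [Zero R] [One R] {p : m} {x : m → R}
    (hx : ∀ i < p, x i = 0) : ((1 : Matrix m m R).updateCol p x).IsLowerTriangular := by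
  intro i c (hic : i < c)
  rcases eq_or_ne c p with rfl | hc
  · rw [updateCol_self, hx i hic]
  · rw [updateCol_ne hc, one_apply_ne hic.ne]

theorem isUnit_updateCol_one [Fintype m] [CommRing R] {p : m} {x : m → R}
    (hx : ∀ i < p, x i = 0) (hxp : IsUnit (x p)) : IsUnit ((1 : Matrix m m R).updateCol p x) := by
  have htri : ((1 : Matrix m m R).updateCol p x)ᵀ.IsUpperTriangular :=
    (isLowerTriangular_updateCol_one hx).transpose
  rw [← isUnit_transpose, isUnit_iff_of_isUpperTriangular htri]
  intro i
  rcases eq_or_ne i p with rfl | hi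
  · rwa [transpose_apply, updateCol_self]
  · rw [transpose_apply, updateCol_ne hi, one_apply_eq]
    exact isUnit_one

theorem isUpperUnitriangular_updateRow_one [Zero R] [One R] {j : m} {y : m → R}
    (hy : ∀ c < j, y c = 0) (hyj : y j = 1) :
    IsUpperUnitriangular ((1 : Matrix m m R).updateRow j y) := by
  refine ⟨fun i c (hci : c < i) => ?_, fun i => ?_⟩
  all_goals rcases eq_or_ne i j with rfl | hi
  · rw [updateRow_self, hy c hci]
  · rw [updateRow_ne hi, one_apply_ne hci.ne']
  · rw [updateRow_self, hyj]
  · rw [updateRow_ne hi, one_apply_eq]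

end UpdateOne

section ReducedRow

variable {m n R F : Type*} [DecidableEq m] [DecidableEq n] [Field F]

/-- Row `i` of `B` is reduced: it is zero, or its only nonzero entry is a `1` that is also the only
nonzero entry of its column. A matrix lies in `P_s` iff all its rows are reduced, and elimination
reduces the rows one at a time. -/
def IsReducedRow [Zero R] [One R] (B : Matrix m n R) (i : m) : Prop :=
  B.row i = 0 ∨ ∃ j, B.row i = Pi.single j 1 ∧ B.col j = Pi.single i 1

theorem IsReducedRow.apply_eq_zero [Zero R] [One R] {B : Matrix m n R} {i p : m} {j : n}
    (hi : IsReducedRow B i) (hip : i ≠ p) (hpj : B p j ≠ 0) : B i j = 0 := by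
  rcases hi with hrow | ⟨c, hrow, hcol⟩
  · exact congrFun hrow j
  · have hjc : j ≠ c := by
      rintro rfl
      exact hpj ((congrFun hcol p).trans (Pi.single_eq_of_ne hip.symm 1))
    exact (congrFun hrow j).trans (Pi.single_eq_of_ne hjc 1)

theorem IsReducedRow.row_mul_transpose [Fintype n] [NonAssocSemiring R] {B : Matrix m n R} {i : m}
    (hi : IsReducedRow B i) :
    B.row i = 0 ∧ (B * Bᵀ).row i = 0 ∨ (B * Bᵀ).row i = Pi.single i 1 := by
  have hmul : (B * Bᵀ).row i = B.row i ᵥ* Bᵀ := mul_apply_eq_vecMul B Bᵀ i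
  rcases hi with hrow | ⟨j, hrow, hcol⟩
  · exact .inl ⟨hrow, by rw [hmul, hrow, zero_vecMul]⟩
  · exact .inr (by rw [hmul, hrow, single_one_vecMul, row_transpose, hcol])

theorem inP_iff_forall_isReducedRow {E : Matrix m m F} : InP E ↔ ∀ i, IsReducedRow E i := by
  constructor
  · rintro ⟨h01, hrow, hcol⟩ i
    by_cases hi : E.row i = 0
    · exact .inl hi
    obtain ⟨j, hj⟩ : ∃ j, E i j ≠ 0 := Function.ne_iff.mp hi
    have hij : E i j = 1 := (h01 i j).resolve_left hj
    refine .inr ⟨j, funext fun k => ?_, funext fun k => ?_⟩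
    · rcases eq_or_ne k j with rfl | hk
      · simpa using hij
      · simpa [hk] using by_contra fun h => hk (hrow i k j h hj)
    · rcases eq_or_ne k i with rfl | hk
      · simpa using hij
      · simpa [hk] using by_contra fun h => hk (hcol k j i h hj)
  · intro h
    refine ⟨fun i j => ?_, fun i j k hj hk => ?_, fun i j k hi hk => ?_⟩
    · rcases h i with hrow | ⟨c, hrow, -⟩
      · exact .inl (congrFun hrow j)
      · rw [← row_apply E, hrow, Pi.single_apply]
        exact (ite_eq_or_eq _ _ _).symm
    · rcases h i with hrow | ⟨c, hrow, -⟩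
      · exact absurd (congrFun hrow j) hj
      · rw [← row_apply E, hrow, Pi.single_apply] at hj hk
        exact (ite_ne_right_iff.mp hj).1.trans (ite_ne_right_iff.mp hk).1.symm
    · exact by_contra fun hik => hi ((h i).apply_eq_zero hik hk)

end ReducedRow

section Elimination

variable {m n F : Type*} [Field F] {B : Matrix m n F} {p : m} {j : n}

/-- The Schur complement of the entry `B p j`, kept at the size of `B`: the result of clearing row
`p` and column `j` with the pivot `B p j`. Meaningful only for `B p j ≠ 0`. -/
def schurCompl (B : Matrix m n F) (p : m) (j : n) : Matrix m n F :=
  B - vecMulVec (B.col j) ((B p j)⁻¹ • B.row p)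

theorem row_schurCompl_pivot (h : B p j ≠ 0) : (schurCompl B p j).row p = 0 := by
  ext c
  simp [schurCompl, vecMulVec_apply, h]

theorem col_schurCompl_pivot (h : B p j ≠ 0) : (schurCompl B p j).col j = 0 := by
  ext i
  simp [schurCompl, vecMulVec_apply, inv_mul_cancel₀ h, -vecMulVec_smul]

variable [DecidableEq m] [DecidableEq n]

/-- The result of eliminating with the pivot `B p j`, normalised to `1`. -/
def eliminate (B : Matrix m n F) (p : m) (j : n) : Matrix m n F :=
  schurCompl B p j + single p j 1

theorem row_eliminate_of_apply_eq_zero {i : m} (hip : i ≠ p) (hij : B i j = 0) :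
    (eliminate B p j).row i = B.row i := by
  ext c
  simp [eliminate, schurCompl, vecMulVec_apply, hij, hip.symm]

theorem col_eliminate_of_apply_eq_zero {c : n} (hcj : c ≠ j) (hpc : B p c = 0) :
    (eliminate B p j).col c = B.col c := by
  ext i
  simp [eliminate, schurCompl, vecMulVec_apply, hpc, hcj.symm]

theorem isReducedRow_eliminate_pivot (h : B p j ≠ 0) : IsReducedRow (eliminate B p j) p := by
  refine .inr ⟨j, funext fun c => ?_, funext fun i => ?_⟩
  · have hS : schurCompl B p j p c = 0 := congrFun (row_schurCompl_pivot h) c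
    simp [eliminate, hS, single_apply, Pi.single_apply, eq_comm]
  · have hS : schurCompl B p j i j = 0 := congrFun (col_schurCompl_pivot h) i
    simp [eliminate, hS, single_apply, Pi.single_apply, eq_comm]

theorem IsReducedRow.eliminate {i : m} (hi : IsReducedRow B i) (h : B p j ≠ 0) (hip : i ≠ p) :
    IsReducedRow (eliminate B p j) i := by
  have hij : B i j = 0 := hi.apply_eq_zero hip h
  have hrow_eq := row_eliminate_of_apply_eq_zero hip hij
  rcases hi with hrow | ⟨c, hrow, hcol⟩
  · exact .inl (hrow_eq.trans hrow)
  · have hpc : B p c = 0 := (congrFun hcol p).trans (Pi.single_eq_of_ne hip.symm 1)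
    have hcj : c ≠ j := fun hcj => h (hcj ▸ hpc)
    exact .inr ⟨c, hrow_eq.trans hrow, (col_eliminate_of_apply_eq_zero hcj hpc).trans hcol⟩

theorem updateCol_one_mul_eliminate_mul_updateRow_one [Fintype m] [Fintype n] (h : B p j ≠ 0) :
    (1 : Matrix m m F).updateCol p (B.col j) * eliminate B p j *
      (1 : Matrix n n F).updateRow j ((B p j)⁻¹ • B.row p) = B := by
  set M := (1 : Matrix m m F).updateCol p (B.col j)
  set V := (1 : Matrix n n F).updateRow j ((B p j)⁻¹ • B.row p)
  have hschur : M * schurCompl B p j * V = schurCompl B p j := by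
    rw [updateCol_one_mul_of_row_eq_zero (row_schurCompl_pivot h),
      mul_updateRow_one_of_col_eq_zero (col_schurCompl_pivot h)]
  have hMcol : M.col p = B.col j := funext fun i => updateCol_self
  have hVrow : V.row j = (B p j)⁻¹ • B.row p := updateRow_self
  have hsingle : M * (single p j 1 : Matrix m n F) * V =
      vecMulVec (B.col j) ((B p j)⁻¹ • B.row p) := by
    rw [single_eq_single_vecMulVec_single, mul_vecMulVec, vecMulVec_mul, mulVec_single_one,
      single_one_vecMul, hMcol, hVrow]
  rw [eliminate, Matrix.mul_add, Matrix.add_mul, hschur, hsingle, schurCompl, sub_add_cancel]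

end Elimination

section Bruhat

variable {m n F : Type*} [Fintype m] [Fintype n] [LinearOrder m] [LinearOrder n] [Field F]

theorem exists_reduce_first_unreduced_row {B : Matrix m n F} (hB : ¬ ∀ i, IsReducedRow B i) :
    ∃ (M : Matrix m m F) (C : Matrix m n F) (V : Matrix n n F), B = M * C * V ∧
      M.IsLowerTriangular ∧ IsUnit M ∧ IsUpperUnitriangular V ∧
      {i | ¬ IsReducedRow C i} ⊂ {i | ¬ IsReducedRow B i} := by
  obtain ⟨p, hp, hmin⟩ := wellFounded_lt.has_min {i | ¬ IsReducedRow B i} (not_forall.mp hB)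
  obtain ⟨j, hlead, hpj⟩ := row_ne_zero_iff_exists_isLeadingEntry.mp fun h : B p = 0 => hp (.inl h)
  have hcol : ∀ i < p, B i j = 0 := fun i hi =>
    (not_not.mp fun h => hmin i h hi).apply_eq_zero hi.ne hpj
  refine ⟨_, eliminate B p j, _, (updateCol_one_mul_eliminate_mul_updateRow_one hpj).symm,
    isLowerTriangular_updateCol_one hcol, isUnit_updateCol_one hcol hpj.isUnit,
    isUpperUnitriangular_updateRow_one (fun c hc => ?_) (inv_mul_cancel₀ hpj), ?_⟩
  · simp [hlead c hc]
  · have hpC := isReducedRow_eliminate_pivot hpj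
    refine (Set.ssubset_iff_of_subset fun i hiC hiB => ?_).mpr ⟨p, hp, not_not.mpr hpC⟩
    rcases eq_or_ne i p with rfl | hip
    · exact hiC hpC
    · exact hiC (hiB.eliminate hpj hip)

theorem exists_eq_lower_mul_reduced_mul_unitriangular (A : Matrix m n F) :
    ∃ (M : Matrix m m F) (E : Matrix m n F) (V : Matrix n n F), A = M * E * V ∧
      M.IsLowerTriangular ∧ IsUnit M ∧ IsUpperUnitriangular V ∧ ∀ i, IsReducedRow E i := by
  induction hS : {i | ¬ IsReducedRow A i} using WellFoundedLT.induction generalizing A with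
  | ind S ih =>
    subst hS
    by_cases hA : ∀ i, IsReducedRow A i
    · exact ⟨1, A, 1, by simp, blockTriangular_one, isUnit_one, .one, hA⟩
    · obtain ⟨M, C, V, rfl, hM, hMu, hV, hlt⟩ := exists_reduce_first_unreduced_row hA
      obtain ⟨M', E, V', rfl, hM', hMu', hV', hE⟩ := ih _ hlt C rfl
      exact ⟨M * M', E, V' * V, by simp only [Matrix.mul_assoc], hM.mul hM', hMu.mul hMu',
        hV'.mul hV, hE⟩

end Bruhat

section Support

variable {m F : Type*} [Field F] {E : Matrix m m F}

theorem InP.transpose (hE : InP E) : InP Eᵀ :=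
  ⟨fun i j => hE.1 j i, fun i j k => hE.2.2 j i k, fun i j k => hE.2.1 j i k⟩

variable [Fintype m]

theorem InD.isIdempotentElem {D : Matrix m m F} (hD : InD D) : IsIdempotentElem D := by
  classical
  rw [IsIdempotentElem, ← hD.1.diagonal_diag, diagonal_mul_diagonal, diagonal_eq_diagonal_iff]
  intro i
  rcases hD.2 i with h | h <;> simp [h]

theorem InP.inD_mul_transpose (hE : InP E) : InD (E * Eᵀ) := by
  classical
  have hrow i := (inP_iff_forall_isReducedRow.mp hE i).row_mul_transpose.imp_left And.right
  refine ⟨fun i k hik => ?_, fun i => ?_⟩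
  · rcases hrow i with h | h
    · exact congrFun h k
    · exact (congrFun h k).trans (Pi.single_eq_of_ne hik.symm 1)
  · exact (hrow i).imp (congrFun · i) fun h => (congrFun h i).trans (Pi.single_eq_same i 1)

theorem InP.mul_transpose_mul_self (hE : InP E) : E * Eᵀ * E = E := by
  classical
  funext i
  rw [mul_apply_eq_vecMul]
  rcases (inP_iff_forall_isReducedRow.mp hE i).row_mul_transpose with ⟨hi, h⟩ | h
  · exact (congrArg (· ᵥ* E) h).trans ((zero_vecMul E).trans hi.symm)
  · exact (congrArg (· ᵥ* E) h).trans (single_one_vecMul i E)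

end Support

section SpliceRows

variable {m F : Type*} [Fintype m] [Field F]

/-- For `D` diagonal with entries in `{0,1}`: the matrix whose rows are those of `V` where
`D i i = 1` and those of the identity where `D i i = 0`. -/
def spliceRows [DecidableEq m] (D V : Matrix m m F) : Matrix m m F :=
  D * V + (1 - D)

variable {D V : Matrix m m F}

theorem spliceRows_apply_self [DecidableEq m] (hD : InD D) (V : Matrix m m F) (i : m) :
    spliceRows D V i i = V i i ∨ spliceRows D V i i = 1 := by
  have hdiag : spliceRows D V i i = D i i * V i i + (1 - D i i) := by
    rw [spliceRows, ← hD.1.diagonal_diag]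
    simp [diagonal_mul]
  rcases hD.2 i with h | h <;> simp [hdiag, h]

theorem one_sub_mul_spliceRows [DecidableEq m] (hD : InD D) (V : Matrix m m F) :
    (1 - D) * spliceRows D V = 1 - D := by
  rw [spliceRows, mul_add, ← mul_assoc, hD.isIdempotentElem.one_sub_mul_self, zero_mul, zero_add,
    hD.isIdempotentElem.one_sub.eq]

theorem mul_inv_spliceRows_sub_one_sub [DecidableEq m] (hD : InD D)
    (hu : IsUnit (spliceRows D V)) :
    D * ((spliceRows D V)⁻¹ - (1 - D)) = (spliceRows D V)⁻¹ - (1 - D) := by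
  set W := spliceRows D V
  have hfix : (1 - D) * W⁻¹ = 1 - D := by
    rw [isUnit_iff_isUnit_det] at hu
    calc (1 - D) * W⁻¹ = (1 - D) * W * W⁻¹ := by rw [one_sub_mul_spliceRows hD V]
      _ = 1 - D := mul_nonsing_inv_cancel_right W (1 - D) hu
  calc D * (W⁻¹ - (1 - D)) = W⁻¹ - (1 - D) * W⁻¹ - (D - D * D) := by noncomm_ring
    _ = W⁻¹ - (1 - D) := by rw [hfix, hD.isIdempotentElem.eq, sub_self, sub_zero]

theorem InP.mul_spliceRows [DecidableEq m] {E : Matrix m m F} (hE : InP E) (V : Matrix m m F) :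
    E * spliceRows (Eᵀ * E) V = E * V := by
  rw [spliceRows, mul_add, mul_sub, mul_one, ← mul_assoc, ← mul_assoc, hE.mul_transpose_mul_self,
    sub_self, add_zero]

theorem InP.transpose_spliceRows_transpose_mul [DecidableEq m] {E : Matrix m m F} (hE : InP E)
    (M : Matrix m m F) : (spliceRows (E * Eᵀ) Mᵀ)ᵀ * E = M * E := by
  have h := congrArg Matrix.transpose (hE.transpose.mul_spliceRows Mᵀ)
  simpa only [transpose_mul, transpose_transpose] using h

variable [LinearOrder m]

theorem isUpperTriangular_spliceRows (hD : InD D) (hV : V.IsUpperTriangular) :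
    (spliceRows D V).IsUpperTriangular := by
  have hDtri : D.IsUpperTriangular := fun i j hij => hD.1 (ne_of_gt hij)
  exact (hDtri.mul hV).add (blockTriangular_one.sub hDtri)

theorem isUnit_spliceRows (hD : InD D) (hV : V.IsUpperTriangular) (hu : IsUnit V) :
    IsUnit (spliceRows D V) := by
  rw [isUnit_iff_of_isUpperTriangular (isUpperTriangular_spliceRows hD hV)]
  intro i
  rcases spliceRows_apply_self hD V i with h | h <;> rw [h]
  exacts [(isUnit_iff_of_isUpperTriangular hV).mp hu i, isUnit_one]

theorem IsUpperUnitriangular.spliceRows (hV : IsUpperUnitriangular V) (hD : InD D) :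
    IsUpperUnitriangular (spliceRows D V) :=
  ⟨isUpperTriangular_spliceRows hD hV.1, fun i =>
    (spliceRows_apply_self hD V i).elim (·.trans (hV.2 i)) id⟩

end SpliceRows

/-- Theorem 2: every `s×s` matrix (`s ≥ 1`) over a field admits an
LEU-decomposition (with `I = J = 𝟙`). -/
theorem leu_exists {F : Type*} [Field F] {s : ℕ} (hs : 1 ≤ s)
    (A : Matrix (Fin s) (Fin s) F) :
    ∃ L E U : Matrix (Fin s) (Fin s) F, IsLEU 1 1 A L E U := by
  obtain ⟨M, E, V, rfl, hM, hMu, hV, hE⟩ := exists_eq_lower_mul_reduced_mul_unitriangular A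
  have hP : InP E := inP_iff_forall_isReducedRow.mpr hE
  have hI : InD (E * Eᵀ) := hP.inD_mul_transpose
  have hJ : InD (Eᵀ * E) := hP.transpose.inD_mul_transpose
  have hMt : Mᵀ.IsUpperTriangular := hM.transpose
  set X := spliceRows (E * Eᵀ) Mᵀ
  set W := spliceRows (Eᵀ * E) V
  have hXu : IsUnit X := isUnit_spliceRows hI hMt ((isUnit_transpose M).mpr hMu)
  have hX : X⁻¹.IsUpperTriangular :=
    isUpperTriangular_inv (isUpperTriangular_spliceRows hI hMt) hXu
  have hW : IsUpperUnitriangular W := hV.spliceRows hJ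
  refine ⟨X⁻¹ᵀ, E, W⁻¹, ?_, hP, ?_, fun i j hij => hX hij, fun i j hij => hW.inv.1 hij, hW.inv.2,
    ?_, ?_⟩
  · rw [← transpose_nonsing_inv, nonsing_inv_nonsing_inv X ((isUnit_iff_isUnit_det X).mp hXu),
      nonsing_inv_nonsing_inv W ((isUnit_iff_isUnit_det W).mp hW.isUnit),
      hP.transpose_spliceRows_transpose_mul, mul_assoc, mul_assoc, hP.mul_spliceRows]
  · exact (isUnit_transpose _).mpr (isUnit_nonsing_inv_iff.mpr hXu)
  · simpa [InFIJ] using congrArg transpose (mul_inv_spliceRows_sub_one_sub hI hXu)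
  · simpa [InFIJ] using mul_inv_spliceRows_sub_one_sub hJ hW.isUnit
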